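/- arXiv:1006.0536 — 2 statements merged into one kernel-verified Lean document; each statement's English description precedes it below -/
import Mathlib

section
/- (Full general Pietsch Domination Theorem.) Let t, r ∈ ℕ; for j = 1, …, t let K_j be a compact Hausdorff topological space and G_j a Banach space, and for l = 1, …, r let E_l be a nonempty set. Let S : (E₁×⋯×E_r) × (G₁×⋯×G_t) → [0,∞) and, for each j, R_j : K_j × (E₁×⋯×E_r) × G_j → [0,∞) be maps such that: (i) for every x = (x^{(1)}, …, x^{(r)}) and every b ∈ G_j, the map φ ↦ R_j(φ, x, b) is continuous on K_j; (ii) R_j(φ, x, ηb) ≤ η R_j(φ, x, b) for all 0 ≤ η ≤ 1, and S(x, α₁b^{(1)}, …, α_t b^{(t)}) ≥ α₁⋯α_t S(x, b^{(1)}, …, b^{(t)}) for all 0 ≤ α₁, …, α_t ≤ 1. Let 0 < p₁, …, p_t < ∞ and define p by 1/p = 1/p₁ + ⋯ + 1/p_t. Then the following are equivalent: (a) there is a constant C > 0 such that (Σ_{i=1}^m S(x_i, b_i^{(1)}, …, b_i^{(t)})^p)^{1/p} ≤ C · ∏_{k=1}^t sup_{φ∈K_k} (Σ_{i=1}^m R_k(φ,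 x_i, b_i^{(k)})^{p_k})^{1/p_k} for every m ∈ ℕ and all x_i ∈ E₁×⋯×E_r, b_i^{(k)} ∈ G_k; (b) there are a constant C > 0 and Borel probability measures μ_j on K_j (j = 1, …, t) such that S(x, b^{(1)}, …, b^{(t)}) ≤ C · ∏_{j=1}^t (∫_{K_j} R_j(φ, x, b^{(j)})^{p_j} dμ_j(φ))^{1/p_j} for all x ∈ E₁×⋯×E_r and all b^{(j)} ∈ G_j. -/
open scoped BigOperators
open MeasureTheory

lemma aux_holder {ι : Type*} [Fintype ι] {t : ℕ} (w : Fin t → ℝ) (hw : ∀ k, 0 < w k)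
    (hw1 : ∑ k, w k = 1) (A : ι → Fin t → ℝ) (hA : ∀ i k, 0 ≤ A i k) :
    ∑ i, ∏ k, A i k ^ w k ≤ ∏ k, (∑ i, A i k) ^ w k := by
  have hT : ∀ k, 0 ≤ ∑ i, A i k := fun k => Finset.sum_nonneg fun i _ => hA i k
  by_cases h : ∀ k, 0 < ∑ i, A i k
  · have hP : 0 < ∏ k, (∑ i, A i k) ^ w k :=
      Finset.prod_pos fun k _ => Real.rpow_pos_of_pos (h k) _
    have h1 : ∀ i, ∏ k, A i k ^ w k ≤
        (∑ k, w k * (A i k / ∑ i, A i k)) * ∏ k, (∑ i, A i k) ^ w k := by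
      intro i
      have := Real.geom_mean_le_arith_mean_weighted Finset.univ w
        (fun k => A i k / ∑ i, A i k) (fun k _ => (hw k).le) hw1
        (fun k _ => div_nonneg (hA i k) (hT k))
      have e : ∏ k, (A i k / ∑ i, A i k) ^ w k
          = (∏ k, A i k ^ w k) / ∏ k, (∑ i, A i k) ^ w k := by
        rw [← Finset.prod_div_distrib]
        exact Finset.prod_congr rfl fun k _ => Real.div_rpow (hA i k) (hT k) _
      rw [e, div_le_iff₀ hP] at this
      exact this
    calc _ ≤ ∑ i, (∑ k, w k * (A i k / ∑ i, A i k)) * ∏ k, (∑ i, A i k) ^ w k :=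
          Finset.sum_le_sum fun i _ => h1 i
      _ = _ := by
          rw [← Finset.sum_mul, Finset.sum_comm]
          have : ∀ k, ∑ i, w k * (A i k / ∑ i, A i k) = w k := by
            intro k
            rw [← Finset.mul_sum, ← Finset.sum_div, div_self (h k).ne', mul_one]
          simp only [this, hw1, one_mul]
  · push Not at h
    obtain ⟨k, hk⟩ := h
    have h0 : ∑ i, A i k = 0 := le_antisymm hk (hT k)
    have h1 : ∀ i, A i k = 0 := fun i =>
      (Finset.sum_eq_zero_iff_of_nonneg (fun i _ => hA i k)).1 h0 i (Finset.mem_univ _)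
    have h2 : ∀ i, ∏ k, A i k ^ w k = 0 := fun i =>
      Finset.prod_eq_zero (Finset.mem_univ k) (by rw [h1, Real.zero_rpow (hw k).ne'])
    simp only [h2, Finset.sum_const_zero]
    exact Finset.prod_nonneg fun k _ => Real.rpow_nonneg (hT k) _

lemma aux_scale {t : ℕ} (w : Fin t → ℝ) (hw : ∀ k, 0 < w k) (hw1 : ∑ k, w k = 1)
    (p : Fin t → ℝ) (hp : ∀ j, 0 < p j) (p₀ : ℝ) (hwp : ∀ k, w k = p₀ / p k)
    (s D : ℝ) (hD : 0 ≤ D) (I : Fin t → ℝ) (hI : ∀ k, 0 ≤ I k)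
    (H : ∀ α : Fin t → ℝ, (∀ j, 0 ≤ α j ∧ α j ≤ 1) →
      (∏ k, α k) ^ p₀ * s ≤ D * ∑ k, w k * (α k ^ p k * I k)) :
    s ≤ D * ∏ k, I k ^ w k := by
  have key : ∀ ε : ℝ, 0 < ε → s ≤ D * ∏ k, (I k + ε) ^ w k := by
    intro ε hε
    have hJ : ∀ k, 0 < I k + ε := fun k => by have := hI k; linarith
    have hP : 0 < ∏ k, (I k + ε) ^ w k := Finset.prod_pos fun k _ => Real.rpow_pos_of_pos (hJ k) _
    have hq : ∀ k, 0 ≤ ε / (I k + ε) := fun k => (div_pos hε (hJ k)).le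
    have h := H (fun k => (ε / (I k + ε)) ^ (1 / p k)) (fun k =>
      ⟨Real.rpow_nonneg (hq k) _, Real.rpow_le_one (hq k)
        ((div_le_one (hJ k)).2 (by have := hI k; linarith)) (one_div_nonneg.2 (hp k).le)⟩)
    have e1 : (∏ k, (ε / (I k + ε)) ^ (1 / p k)) ^ p₀ = ε / ∏ k, (I k + ε) ^ w k := by
      rw [← Real.finsetProd_rpow _ _ (fun k _ => Real.rpow_nonneg (hq k) _)]
      have : ∀ k, ((ε / (I k + ε)) ^ (1 / p k)) ^ p₀ = ε ^ w k / (I k + ε) ^ w k := by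
        intro k
        rw [← Real.rpow_mul (hq k), ← Real.div_rpow hε.le (hJ k).le, hwp]
        congr 1; ring
      simp only [this, Finset.prod_div_distrib]
      rw [← Real.rpow_sum_of_pos hε, hw1, Real.rpow_one]
    have e2 : ∑ k, w k * (((ε / (I k + ε)) ^ (1 / p k)) ^ p k * I k) ≤ ε := by
      calc _ ≤ ∑ k, w k * ε := by
            refine Finset.sum_le_sum fun k _ => mul_le_mul_of_nonneg_left ?_ (hw k).le
            rw [← Real.rpow_mul (hq k), one_div_mul_cancel (hp k).ne', Real.rpow_one,
              div_mul_eq_mul_div, div_le_iff₀ (hJ k)]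
            nlinarith
        _ = ε := by rw [← Finset.sum_mul, hw1, one_mul]
    rw [e1] at h
    have h2 := h.trans (mul_le_mul_of_nonneg_left e2 hD)
    rw [div_mul_eq_mul_div, div_le_iff₀ hP] at h2
    have : ε * s ≤ ε * (D * ∏ k, (I k + ε) ^ w k) := by linarith
    exact le_of_mul_le_mul_left this hε
  have hc : Continuous fun ε : ℝ => D * ∏ k, (I k + ε) ^ w k := by
    refine continuous_const.mul (continuous_finsetProd _ fun k _ => ?_)
    exact (continuous_const.add continuous_id).rpow_const fun _ => Or.inr (hw k).le
  have ht : Filter.Tendsto (fun ε : ℝ => D * ∏ k, (I k + ε) ^ w k) (nhdsWithin 0 (Set.Ioi 0))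
      (nhds (D * ∏ k, I k ^ w k)) := by
    have := hc.tendsto 0
    simp only [add_zero] at this
    exact this.mono_left nhdsWithin_le_nhds
  exact ge_of_tendsto ht (by filter_upwards [self_mem_nhdsWithin] with ε hε using key ε hε)

lemma aux_sep {X : Type*} [TopologicalSpace X] [CompactSpace X] [T2Space X]
    [MeasurableSpace X] [BorelSpace X] (B : Set C(X, ℝ)) (hB : Convex ℝ B) (h0 : (0 : C(X, ℝ)) ∈ B)
    (hneg : ∀ g ∈ B, ∃ φ, g φ ≤ 0) :
    ∃ μ : Measure X, IsProbabilityMeasure μ ∧ ∀ g ∈ B, ∫ φ, g φ ∂μ ≤ 0 := by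
  let A : Set C(X, ℝ) := {f | ∀ x, 0 < f x}
  have hAo : IsOpen A := by
    have := ContinuousMap.isOpen_setOfPred_mapsTo (X := X) (Y := ℝ) isCompact_univ
      (isOpen_Ioi (a := (0 : ℝ)))
    convert this using 1
    ext f; simp [A, Set.MapsTo]
  have hAc : Convex ℝ A := by
    intro f hf g hg a b ha hb hab x
    have h1 := hf x
    have h2 := hg x
    simp only [ContinuousMap.add_apply, ContinuousMap.smul_apply, smul_eq_mul]
    rcases ha.eq_or_lt with h | h
    · subst h; have : b = 1 := by linarith
      subst this; simpa using h2
    · have := mul_pos h h1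
      have := mul_nonneg hb h2.le
      linarith
  have hd : Disjoint A B := by
    rw [Set.disjoint_left]
    intro g hg hgB
    obtain ⟨φ, hφ⟩ := hneg g hgB
    exact absurd (hg φ) (not_lt.2 hφ)
  obtain ⟨f, u, hfA, hfB⟩ := geometric_hahn_banach_open hAc hAo hB hd
  have hu0 : u ≤ 0 := by simpa using hfB 0 h0
  have h1A : (1 : C(X, ℝ)) ∈ A := fun x => by simp
  have hf1 : f 1 < 0 := (hfA 1 h1A).trans_le hu0
  have hu : u = 0 := by
    refine le_antisymm hu0 (le_of_forall_pos_lt_add fun ε hε => ?_ )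
    have hmem : ((ε / (-f 1)) • (1 : C(X, ℝ))) ∈ A := fun x => by
      have : 0 < ε / (-f 1) := div_pos hε (by linarith)
      simpa using this
    have := hfA _ hmem
    rw [map_smul, smul_eq_mul] at this
    have e : ε / (-f 1) * f 1 = -ε := by
      have := hf1.ne
      field_simp
    linarith
  have hpos : ∀ g : C(X, ℝ), (∀ x, 0 ≤ g x) → f g ≤ 0 := by
    intro g hg
    refine le_of_forall_pos_lt_add fun ε hε => ?_
    have hmem : (g + (ε / (-f 1)) • (1 : C(X, ℝ))) ∈ A := fun x => by
      have : 0 < ε / (-f 1) := div_pos hε (by linarith)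
      have := hg x
      simp only [ContinuousMap.add_apply, ContinuousMap.smul_apply, ContinuousMap.one_apply,
        smul_eq_mul, mul_one]
      linarith
    have := hfA _ hmem
    rw [map_add, map_smul, smul_eq_mul] at this
    have e : ε / (-f 1) * f 1 = -ε := by
      have := hf1.ne
      field_simp
    linarith
  let L : CompactlySupportedContinuousMap X ℝ →ₗ[ℝ] ℝ :=
    { toFun := fun g => (f 1)⁻¹ * f (g : C(X, ℝ))
      map_add' := fun a b => by
        have : ((a + b : CompactlySupportedContinuousMap X ℝ) : C(X, ℝ)) = (a : C(X, ℝ)) + b := rfl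
        rw [this, map_add, mul_add]
      map_smul' := fun c a => by
        have : ((c • a : CompactlySupportedContinuousMap X ℝ) : C(X, ℝ)) = c • (a : C(X, ℝ)) := rfl
        rw [this, map_smul]; simp; ring }
  let Λ := PositiveLinearMap.mk₀ L (fun g hg =>
    mul_nonneg_of_nonpos_of_nonpos (inv_nonpos.2 hf1.le) (hpos _ fun x =>
      CompactlySupportedContinuousMap.le_def.1 hg x))
  have hint : ∀ g : C(X, ℝ), ∫ x, g x ∂(RealRMK.rieszMeasure Λ) = (f 1)⁻¹ * f g := fun g =>
    RealRMK.integral_rieszMeasure Λ (CompactlySupportedContinuousMap.continuousMapEquiv g)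
  refine ⟨RealRMK.rieszMeasure Λ, ⟨?_⟩, ?_⟩
  · have := hint 1
    rw [inv_mul_cancel₀ hf1.ne] at this
    simp only [ContinuousMap.one_apply, integral_const, smul_eq_mul, mul_one] at this
    rw [measureReal_def, ENNReal.toReal_eq_one_iff] at this
    exact this
  · intro g hg
    rw [hint]
    exact mul_nonpos_of_nonpos_of_nonneg (inv_nonpos.2 hf1.le) (hu ▸ hfB g hg)

/-- **Full general Pietsch Domination Theorem.** With compact Hausdorff
spaces `K₁, …, K_t`, Banach spaces `G₁, …, G_t`, nonempty sets `E₁, …, E_r` and maps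
`S`, `R₁, …, R_t` satisfying the continuity and homogeneity conditions (i), (ii), and
`0 < p₁, …, p_t < ∞` with `1/p = 1/p₁ + ⋯ + 1/p_t`, the map `S` satisfies the abstract
`(p₁,…,p_t)`-summing inequality if and only if there are `C > 0` and Borel probability
measures `μⱼ` on `Kⱼ` with
`S(x, b⁽¹⁾, …, b⁽ᵗ⁾) ≤ C ∏ⱼ (∫_{Kⱼ} Rⱼ(φ, x, b⁽ʲ⁾)^{pⱼ} dμⱼ)^{1/pⱼ}`. -/
theorem stmt11 {t r : ℕ}
    {K : Fin t → Type*} [∀ j, TopologicalSpace (K j)] [∀ j, CompactSpace (K j)]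
    [∀ j, T2Space (K j)] [∀ j, Nonempty (K j)]
    [∀ j, MeasurableSpace (K j)] [∀ j, BorelSpace (K j)]
    {G : Fin t → Type*} [∀ j, NormedAddCommGroup (G j)] [∀ j, NormedSpace ℝ (G j)]
    [∀ j, CompleteSpace (G j)]
    {E : Fin r → Type*} [∀ l, Nonempty (E l)]
    (R : ∀ j, K j → (∀ l, E l) → G j → ℝ)
    (S : (∀ l, E l) → (∀ j, G j) → ℝ)
    (hRnn : ∀ j φ x b, 0 ≤ R j φ x b) (hSnn : ∀ x b, 0 ≤ S x b)
    (hRcont : ∀ j x b, Continuous fun φ : K j => R j φ x b)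
    (hRhom : ∀ j (φ : K j) x (η : ℝ), 0 ≤ η → η ≤ 1 →
      ∀ b : G j, R j φ x (η • b) ≤ η * R j φ x b)
    (hShom : ∀ x (α : Fin t → ℝ), (∀ j, 0 ≤ α j ∧ α j ≤ 1) →
      ∀ b : ∀ j, G j, (∏ j, α j) * S x b ≤ S x (fun j => α j • b j))
    (p : Fin t → ℝ) (hp : ∀ j, 0 < p j)
    (p₀ : ℝ) (hp₀ : 0 < p₀) (hp₀eq : 1 / p₀ = ∑ j, 1 / p j) :
    (∃ C : ℝ, 0 < C ∧ ∀ (m : ℕ) (x : Fin m → ∀ l, E l) (b : Fin m → ∀ j, G j),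
        (∑ i, S (x i) (b i) ^ p₀) ^ (1 / p₀) ≤
          C * ∏ k, ⨆ φ : K k, (∑ i, R k φ (x i) (b i k) ^ p k) ^ (1 / p k)) ↔
    (∃ C : ℝ, 0 < C ∧ ∃ μ : ∀ j, Measure (K j),
        (∀ j, IsProbabilityMeasure (μ j)) ∧
        ∀ (x : ∀ l, E l) (b : ∀ j, G j),
          S x b ≤ C * ∏ j, (∫ φ, R j φ x (b j) ^ p j ∂(μ j)) ^ (1 / p j)) := by
  set w : Fin t → ℝ := fun k => p₀ / p k with hwdef
  have hw : ∀ k, 0 < w k := fun k => div_pos hp₀ (hp k)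
  have hw1 : ∑ k, w k = 1 := by
    have : ∀ k, w k = p₀ * (1 / p k) := fun k => by simp only [hwdef]; ring
    simp only [this]
    rw [← Finset.mul_sum, ← hp₀eq, mul_one_div_cancel hp₀.ne']
  have hRpc : ∀ j x b, Continuous fun φ : K j => R j φ x b ^ p j := fun j x b =>
    (hRcont j x b).rpow_const fun _ => Or.inr (hp j).le
  have hRp0 : ∀ j φ x b, 0 ≤ R j φ x b ^ p j := fun j φ x b => Real.rpow_nonneg (hRnn j φ x b) _
  constructor
  · rintro ⟨C, hC, ha⟩
    have hD : 0 < C ^ p₀ := Real.rpow_pos_of_pos hC _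
    -- the summing inequality for arbitrary finite index types, at a suitable point
    have ha' : ∀ (ι : Type) [Fintype ι] (x : ι → ∀ l, E l) (b : ι → ∀ j, G j),
        ∃ φ : ∀ j, K j, ∑ i, S (x i) (b i) ^ p₀ ≤
          C ^ p₀ * ∑ k, w k * ∑ i, R k (φ k) (x i) (b i k) ^ p k := by
      intro ι _ x b
      have hmax : ∀ k, ∃ φ : K k, ∀ ψ : K k, ∑ i, R k ψ (x i) (b i k) ^ p k ≤
          ∑ i, R k φ (x i) (b i k) ^ p k := by
        intro k
        have hc : Continuous fun ψ : K k => ∑ i, R k ψ (x i) (b i k) ^ p k :=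
          continuous_finsetSum _ fun i _ => hRpc k (x i) (b i k)
        obtain ⟨φ, -, hφ⟩ := isCompact_univ.exists_isMaxOn Set.univ_nonempty hc.continuousOn
        exact ⟨φ, fun ψ => hφ (Set.mem_univ ψ)⟩
      choose φ hφ using hmax
      refine ⟨φ, ?_⟩
      have hM : ∀ k (ψ : K k), 0 ≤ ∑ i, R k ψ (x i) (b i k) ^ p k := fun k ψ =>
        Finset.sum_nonneg fun i _ => hRp0 k _ _ _
      have hS : 0 ≤ ∑ i, S (x i) (b i) ^ p₀ :=
        Finset.sum_nonneg fun i _ => Real.rpow_nonneg (hSnn _ _) _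
      have h1 : (∑ i, S (x i) (b i) ^ p₀) ^ (1 / p₀) ≤
          C * ∏ k, ⨆ ψ : K k, (∑ i, R k ψ (x i) (b i k) ^ p k) ^ (1 / p k) := by
        have e := Fintype.equivFin ι
        have := ha (Fintype.card ι) (fun n => x (e.symm n)) (fun n => b (e.symm n))
        rw [e.symm.sum_comp (fun i => S (x i) (b i) ^ p₀)] at this
        refine this.trans_eq ?_
        congr 1
        refine Finset.prod_congr rfl fun k _ => ?_
        congr 1
        funext ψ
        rw [e.symm.sum_comp (fun i => R k ψ (x i) (b i k) ^ p k)]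
      have h2 : ∏ k, ⨆ ψ : K k, (∑ i, R k ψ (x i) (b i k) ^ p k) ^ (1 / p k) ≤
          ∏ k, (∑ i, R k (φ k) (x i) (b i k) ^ p k) ^ (1 / p k) := by
        refine Finset.prod_le_prod (fun k _ => Real.iSup_nonneg fun ψ =>
          Real.rpow_nonneg (hM k ψ) _) (fun k _ => ciSup_le fun ψ => ?_)
        exact Real.rpow_le_rpow (hM k ψ) (hφ k ψ) (one_div_nonneg.2 (hp k).le)
      have h3 := Real.rpow_le_rpow (Real.rpow_nonneg hS _)
        (h1.trans (mul_le_mul_of_nonneg_left h2 hC.le)) hp₀.le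
      rw [← Real.rpow_mul hS, one_div_mul_cancel hp₀.ne', Real.rpow_one,
        Real.mul_rpow hC.le (Finset.prod_nonneg fun k _ => Real.rpow_nonneg (hM k _) _),
        ← Real.finsetProd_rpow _ _ (fun k _ => Real.rpow_nonneg (hM k _) _)] at h3
      refine h3.trans (mul_le_mul_of_nonneg_left ?_ hD.le)
      have h4 := Real.geom_mean_le_arith_mean_weighted Finset.univ w
        (fun k => ∑ i, R k (φ k) (x i) (b i k) ^ p k) (fun k _ => (hw k).le) hw1
        (fun k _ => hM k _)
      refine le_trans (le_of_eq ?_) h4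
      refine Finset.prod_congr rfl fun k _ => ?_
      rw [← Real.rpow_mul (hM k _)]
      congr 1
      simp only [hwdef]; ring
    let F : (∀ l, E l) → (∀ j, G j) → C(∀ j, K j, ℝ) := fun x b =>
      ⟨fun φ => S x b ^ p₀ - C ^ p₀ * ∑ k, w k * R k (φ k) x (b k) ^ p k, by
        refine continuous_const.sub (continuous_const.mul (continuous_finsetSum _ fun k _ =>
          continuous_const.mul ?_))
        exact (hRpc k x (b k)).comp (continuous_apply k)⟩
    have hFapp : ∀ x b φ, F x b φ =
      S x b ^ p₀ - C ^ p₀ * ∑ k, w k * R k (φ k) x (b k) ^ p k := fun _ _ _ => rfl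
    have hFs : ∀ x b φ (c : ℝ), 0 ≤ c → c ≤ 1 →
        c * F x b φ ≤ F x (fun k => c ^ (1 / p k) • b k) φ := by
      intro x b φ c hc0 hc1
      have hα : ∀ k, 0 ≤ c ^ (1 / p k) ∧ c ^ (1 / p k) ≤ 1 := fun k =>
        ⟨Real.rpow_nonneg hc0 _, Real.rpow_le_one hc0 hc1 (one_div_nonneg.2 (hp k).le)⟩
      rw [hFapp, hFapp]
      have h1 : c * S x b ^ p₀ ≤ S x (fun k => c ^ (1 / p k) • b k) ^ p₀ := by
        have hprod : 0 ≤ ∏ k, c ^ (1 / p k) := Finset.prod_nonneg fun k _ => (hα k).1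
        have := Real.rpow_le_rpow (mul_nonneg hprod (hSnn x b))
          (hShom x (fun k => c ^ (1 / p k)) hα b) hp₀.le
        rw [Real.mul_rpow hprod (hSnn x b)] at this
        refine le_trans (le_of_eq ?_) this
        congr 1
        rw [← Real.rpow_sum_of_nonneg hc0 (fun k _ => one_div_nonneg.2 (hp k).le), ← hp₀eq,
          ← Real.rpow_mul hc0, one_div_mul_cancel hp₀.ne', Real.rpow_one]
      have h2 : ∑ k, w k * R k (φ k) x (c ^ (1 / p k) • b k) ^ p k ≤
          c * ∑ k, w k * R k (φ k) x (b k) ^ p k := by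
        rw [Finset.mul_sum]
        refine Finset.sum_le_sum fun k _ => ?_
        have := Real.rpow_le_rpow (hRnn _ _ _ _)
          (hRhom k (φ k) x _ (hα k).1 (hα k).2 (b k)) (hp k).le
        rw [Real.mul_rpow (hα k).1 (hRnn _ _ _ _), ← Real.rpow_mul hc0,
          one_div_mul_cancel (hp k).ne', Real.rpow_one] at this
        have := mul_le_mul_of_nonneg_left this (hw k).le
        linarith
      have h3 := mul_le_mul_of_nonneg_left h2 hD.le
      linarith
    let B : Set C(∀ j, K j, ℝ) := {g | ∃ (ι : Type) (_ : Fintype ι) (x : ι → ∀ l, E l)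
      (b : ι → ∀ j, G j), ∀ φ, g φ ≤ ∑ i, F (x i) (b i) φ}
    have hBc : Convex ℝ B := by
      rintro g₁ ⟨ι₁, _, x₁, b₁, h₁⟩ g₂ ⟨ι₂, _, x₂, b₂, h₂⟩ c d hc hd hcd
      refine ⟨ι₁ ⊕ ι₂, inferInstance, Sum.elim x₁ x₂,
        Sum.elim (fun i k => c ^ (1 / p k) • b₁ i k) (fun i k => d ^ (1 / p k) • b₂ i k),
        fun φ => ?_⟩
      rw [Fintype.sum_sum_type]
      simp only [Sum.elim_inl, Sum.elim_inr, ContinuousMap.add_apply, ContinuousMap.smul_apply,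
        smul_eq_mul]
      refine add_le_add ?_ ?_
      · refine (mul_le_mul_of_nonneg_left (h₁ φ) hc).trans ?_
        rw [Finset.mul_sum]
        exact Finset.sum_le_sum fun i _ => hFs _ _ _ _ hc (by linarith)
      · refine (mul_le_mul_of_nonneg_left (h₂ φ) hd).trans ?_
        rw [Finset.mul_sum]
        exact Finset.sum_le_sum fun i _ => hFs _ _ _ _ hd (by linarith)
    have hB0 : (0 : C(∀ j, K j, ℝ)) ∈ B :=
      ⟨Empty, inferInstance, fun e => e.elim, fun e => e.elim, fun φ => by simp⟩
    have hBn : ∀ g ∈ B, ∃ φ, g φ ≤ 0 := by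
      rintro g ⟨ι, _, x, b, h⟩
      obtain ⟨φ, hφ⟩ := ha' ι x b
      refine ⟨φ, (h φ).trans ?_⟩
      simp only [hFapp]
      rw [Finset.sum_sub_distrib, ← Finset.mul_sum, Finset.sum_comm]
      simp only [← Finset.mul_sum]
      linarith
    letI : MeasurableSpace (∀ j, K j) := borel _
    haveI : BorelSpace (∀ j, K j) := ⟨rfl⟩
    obtain ⟨μ, hμ, hμB⟩ := aux_sep B hBc hB0 hBn
    have hme : ∀ j, Measurable (fun φ : ∀ j, K j => φ j) := fun j =>
      (continuous_apply j).measurable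
    refine ⟨C, hC, fun j => μ.map (fun φ => φ j), fun j =>
      Measure.isProbabilityMeasure_map (hme j).aemeasurable, fun x b => ?_⟩
    have hmap : ∀ j y, ∫ φ, R j φ x y ^ p j ∂(μ.map (fun φ : ∀ j, K j => φ j)) =
        ∫ φ, R j (φ j) x y ^ p j ∂μ := fun j y =>
      integral_map (hme j).aemeasurable (hRpc j x y).measurable.aestronglyMeasurable
    have hci : ∀ f : (∀ j, K j) → ℝ, Continuous f → Integrable f μ := fun f hf =>
      hf.integrable_of_hasCompactSupport (HasCompactSupport.of_compactSpace f)
    have hint : ∀ j y, Integrable (fun φ : ∀ j, K j => R j (φ j) x y ^ p j) μ := fun j y =>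
      hci _ ((hRpc j x y).comp (continuous_apply j))
    have hI0 : ∀ j y, 0 ≤ ∫ φ, R j (φ j) x y ^ p j ∂μ := fun j y =>
      integral_nonneg fun φ => hRp0 _ _ _ _
    have hdom : ∀ b, S x b ^ p₀ ≤ C ^ p₀ * ∑ k, w k * ∫ φ, R k (φ k) x (b k) ^ p k ∂μ := by
      intro b
      have h := hμB (F x b) ⟨Unit, inferInstance, fun _ => x, fun _ => b, fun φ => by simp⟩
      simp only [hFapp] at h
      rw [integral_sub (integrable_const _)
        ((integrable_finsetSum _ fun k _ => (hint k (b k)).const_mul (w k)).const_mul _),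
        integral_const_mul, integral_finsetSum _ fun k _ => (hint k (b k)).const_mul (w k)] at h
      simp only [integral_const_mul, integral_const, probReal_univ, one_smul] at h
      linarith
    have hfin := aux_scale w hw hw1 p hp p₀ (fun _ => rfl) (S x b ^ p₀) (C ^ p₀) hD.le
      (fun k => ∫ φ, R k (φ k) x (b k) ^ p k ∂μ) (fun k => hI0 k _) (by
        intro α hα
        have hprod : 0 ≤ ∏ k, α k := Finset.prod_nonneg fun k _ => (hα k).1
        rw [← Real.mul_rpow hprod (hSnn x b)]
        refine (Real.rpow_le_rpow (mul_nonneg hprod (hSnn x b)) (hShom x α hα b) hp₀.le).trans ?_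
        refine (hdom _).trans (mul_le_mul_of_nonneg_left ?_ hD.le)
        refine Finset.sum_le_sum fun k _ => mul_le_mul_of_nonneg_left ?_ (hw k).le
        rw [← integral_const_mul]
        refine integral_mono (hint k _) ((hint k _).const_mul _) fun φ => ?_
        have := Real.rpow_le_rpow (hRnn _ _ _ _)
          (hRhom k (φ k) x _ (hα k).1 (hα k).2 (b k)) (hp k).le
        rwa [Real.mul_rpow (hα k).1 (hRnn _ _ _ _)] at this)
    simp only [hmap]
    have hPn : 0 ≤ ∏ k, (∫ φ, R k (φ k) x (b k) ^ p k ∂μ) ^ (1 / p k) :=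
      Finset.prod_nonneg fun k _ => Real.rpow_nonneg (hI0 k _) _
    rw [← Real.rpow_le_rpow_iff (hSnn x b) (mul_nonneg hC.le hPn) hp₀, Real.mul_rpow hC.le hPn,
      ← Real.finsetProd_rpow _ _ (fun k _ => Real.rpow_nonneg (hI0 k _) _)]
    refine hfin.trans_eq ?_
    congr 1
    refine Finset.prod_congr rfl fun k _ => ?_
    rw [← Real.rpow_mul (hI0 k _)]
    congr 1
    simp only [hwdef]; ring
  · rintro ⟨C, hC, μ, hμ, hb⟩
    have hci : ∀ j (f : K j → ℝ), Continuous f → Integrable f (μ j) := fun j f hf =>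
      hf.integrable_of_hasCompactSupport (HasCompactSupport.of_compactSpace f)
    refine ⟨C, hC, fun m x b => ?_⟩
    have hI0 : ∀ i j, 0 ≤ ∫ φ, R j φ (x i) (b i j) ^ p j ∂(μ j) := fun i j =>
      integral_nonneg fun φ => hRp0 _ _ _ _
    have hT0 : ∀ j, 0 ≤ ∑ i, ∫ φ, R j φ (x i) (b i j) ^ p j ∂(μ j) := fun j =>
      Finset.sum_nonneg fun i _ => hI0 i j
    have hM : ∀ k (ψ : K k), 0 ≤ ∑ i, R k ψ (x i) (b i k) ^ p k := fun k ψ =>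
      Finset.sum_nonneg fun i _ => hRp0 k _ _ _
    have hS : 0 ≤ ∑ i, S (x i) (b i) ^ p₀ :=
      Finset.sum_nonneg fun i _ => Real.rpow_nonneg (hSnn _ _) _
    have h1 : ∀ i, S (x i) (b i) ^ p₀ ≤
        C ^ p₀ * ∏ k, (∫ φ, R k φ (x i) (b i k) ^ p k ∂(μ k)) ^ w k := by
      intro i
      have hPn : 0 ≤ ∏ k, (∫ φ, R k φ (x i) (b i k) ^ p k ∂(μ k)) ^ (1 / p k) :=
        Finset.prod_nonneg fun k _ => Real.rpow_nonneg (hI0 i k) _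
      refine (Real.rpow_le_rpow (hSnn _ _) (hb (x i) (b i)) hp₀.le).trans_eq ?_
      rw [Real.mul_rpow hC.le hPn,
        ← Real.finsetProd_rpow _ _ (fun k _ => Real.rpow_nonneg (hI0 i k) _)]
      congr 1
      refine Finset.prod_congr rfl fun k _ => ?_
      rw [← Real.rpow_mul (hI0 i k)]
      congr 1
      simp only [hwdef]; ring
    have h2 : ∑ i, S (x i) (b i) ^ p₀ ≤
        C ^ p₀ * ∏ k, (∑ i, ∫ φ, R k φ (x i) (b i k) ^ p k ∂(μ k)) ^ w k := by
      refine (Finset.sum_le_sum fun i _ => h1 i).trans ?_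
      rw [← Finset.mul_sum]
      exact mul_le_mul_of_nonneg_left (aux_holder w hw hw1 _ hI0) (Real.rpow_nonneg hC.le _)
    have h3 : (∑ i, S (x i) (b i) ^ p₀) ^ (1 / p₀) ≤
        C * ∏ k, (∑ i, ∫ φ, R k φ (x i) (b i k) ^ p k ∂(μ k)) ^ (1 / p k) := by
      refine (Real.rpow_le_rpow hS h2 (one_div_nonneg.2 hp₀.le)).trans_eq ?_
      rw [Real.mul_rpow (Real.rpow_nonneg hC.le _)
        (Finset.prod_nonneg fun k _ => Real.rpow_nonneg (hT0 k) _),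
        ← Real.finsetProd_rpow _ _ (fun k _ => Real.rpow_nonneg (hT0 k) _),
        ← Real.rpow_mul hC.le, mul_one_div_cancel hp₀.ne', Real.rpow_one]
      congr 1
      refine Finset.prod_congr rfl fun k _ => ?_
      rw [← Real.rpow_mul (hT0 k)]
      congr 1
      simp only [hwdef]
      have := hp₀.ne'
      field_simp
    refine h3.trans (mul_le_mul_of_nonneg_left ?_ hC.le)
    refine Finset.prod_le_prod (fun k _ => Real.rpow_nonneg (hT0 k) _) fun k _ => ?_
    have hc : Continuous fun ψ : K k => ∑ i, R k ψ (x i) (b i k) ^ p k :=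
      continuous_finsetSum _ fun i _ => hRpc k (x i) (b i k)
    obtain ⟨φ, -, hφ⟩ := isCompact_univ.exists_isMaxOn Set.univ_nonempty hc.continuousOn
    have hφ' : ∀ ψ, ∑ i, R k ψ (x i) (b i k) ^ p k ≤ ∑ i, R k φ (x i) (b i k) ^ p k :=
      fun ψ => hφ (Set.mem_univ ψ)
    have h4 : ∑ i, ∫ φ, R k φ (x i) (b i k) ^ p k ∂(μ k) ≤
        ∑ i, R k φ (x i) (b i k) ^ p k := by
      rw [← integral_finsetSum _ fun i _ => hci k _ (hRpc k (x i) (b i k))]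
      have := hμ k
      refine (integral_mono (hci k _ hc) (integrable_const _) hφ').trans_eq ?_
      simp
    have hbdd : BddAbove (Set.range fun ψ : K k =>
        (∑ i, R k ψ (x i) (b i k) ^ p k) ^ (1 / p k)) := by
      refine ⟨(∑ i, R k φ (x i) (b i k) ^ p k) ^ (1 / p k), ?_⟩
      rintro _ ⟨ψ, rfl⟩
      exact Real.rpow_le_rpow (hM k ψ) (hφ' ψ) (one_div_nonneg.2 (hp k).le)
    exact (Real.rpow_le_rpow (hT0 k) h4 (one_div_nonneg.2 (hp k).le)).trans (le_ciSup hbdd φ)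
end

section
/- (Unified Pietsch Domination Theorem.) Let E be a nonempty set, G a Banach space, K a compact Hausdorff topological space, 0 < p < ∞, and let R : K × E × G → [0,∞) and S : E × G → [0,∞) be maps such that for every x ∈ E and b ∈ G the map φ ↦ R(φ, x, b) is continuous on K. Then the following are equivalent: (a) there is a constant C > 0 such that (Σ_{j=1}^m S(x_j, b_j)^p)^{1/p} ≤ C · sup_{φ∈K} (Σ_{j=1}^m R(φ, x_j, b_j)^p)^{1/p} for every m ∈ ℕ and all x₁, …, x_m ∈ E, b₁, …, b_m ∈ G; (b) there are a constant C > 0 and a Borel probability measure μ on K such that S(x, b) ≤ C · (∫_K R(φ, x, b)^p dμ(φ))^{1/p} for all x ∈ E and b ∈ G. -/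
open scoped BigOperators
open MeasureTheory

theorem pietsch_real {K : Type*} [TopologicalSpace K] [CompactSpace K] [Nonempty K]
    {I : Type*} (g : I → C(K, ℝ))
    (h : ∀ (m : ℕ) (i : Fin m → I), ∃ φ, ∑ j, g (i j) φ ≤ 0)
    (s : Finset I) (c : I → ℝ) (hc : ∀ i, 0 ≤ c i) :
    ∃ φ, ∑ i ∈ s, c i * g i φ ≤ 0 := by
  by_contra! hpos
  have hcont : Continuous fun φ => ∑ i ∈ s, c i * g i φ := by fun_prop
  obtain ⟨φ₀, -, hφ₀⟩ := isCompact_univ.exists_isMinOn Set.univ_nonempty hcont.continuousOn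
  have hε := hpos φ₀
  set ε := ∑ i ∈ s, c i * g i φ₀ with hεdef
  obtain ⟨N, hN⟩ := exists_nat_gt ((∑ i ∈ s, ‖g i‖) / ε)
  rw [div_lt_iff₀ hε] at hN
  let n : I → ℕ := fun i => ⌈N * c i⌉₊
  let T := Σ i : s, Fin (n i)
  let e : Fin (Fintype.card T) ≃ T := (Fintype.equivFin T).symm
  obtain ⟨φ, hφ⟩ := h _ (fun j => ((e j).1 : I))
  rw [e.sum_comp (fun q : T => g (q.1 : I) φ), Fintype.sum_sigma] at hφ
  simp only [Finset.sum_const, Finset.card_univ, Fintype.card_fin, nsmul_eq_mul] at hφ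
  rw [Finset.sum_coe_sort s (fun i => (n i : ℝ) * g i φ)] at hφ
  have h1 : ε ≤ ∑ i ∈ s, c i * g i φ := hφ₀ (Set.mem_univ φ)
  have h2 : N * (∑ i ∈ s, c i * g i φ) - ∑ i ∈ s, ‖g i‖ ≤ ∑ i ∈ s, (n i : ℝ) * g i φ := by
    rw [Finset.mul_sum, ← Finset.sum_sub_distrib]
    refine Finset.sum_le_sum fun i _ => ?_
    have ha : (N : ℝ) * c i ≤ n i := Nat.le_ceil _
    have hb : (n i : ℝ) < N * c i + 1 :=
      Nat.ceil_lt_add_one (mul_nonneg (Nat.cast_nonneg _) (hc i))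
    have hg := (abs_le.1 ((g i).norm_coe_le_norm φ)).1
    have hg0 := norm_nonneg (g i)
    nlinarith
  have h3 : (N : ℝ) * ε ≤ N * (∑ i ∈ s, c i * g i φ) :=
    mul_le_mul_of_nonneg_left h1 (Nat.cast_nonneg _)
  linarith

theorem pietsch_abs {K : Type*} [TopologicalSpace K] [CompactSpace K] [T2Space K]
    [Nonempty K] [MeasurableSpace K] [BorelSpace K]
    {I : Type*} (g : I → C(K, ℝ))
    (h : ∀ (m : ℕ) (i : Fin m → I), ∃ φ, ∑ j, g (i j) φ ≤ 0) :
    ∃ μ : Measure K, IsProbabilityMeasure μ ∧ ∀ i, ∫ φ, g i φ ∂μ ≤ 0 := by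
  let s : Set C(K, ℝ) := {f | ∀ φ, 0 < f φ}
  let t : PointedCone ℝ C(K, ℝ) := PointedCone.hull ℝ (Set.range g)
  have hs₁ : Convex ℝ s := by
    intro f hf f' hf' a b ha hb hab φ
    have h1 := hf φ
    have h2 := hf' φ
    simp only [ContinuousMap.add_apply, ContinuousMap.smul_apply, smul_eq_mul]
    rcases ha.eq_or_lt with rfl | ha
    · have : b = 1 := by linarith
      subst this; simpa using h2
    · have := mul_pos ha h1
      have := mul_nonneg hb h2.le
      linarith
  have hs₂ : IsOpen s := by
    have : s = {f : C(K, ℝ) | Set.MapsTo f Set.univ (Set.Ioi 0)} := by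
      ext f; simp [s, Set.MapsTo]
    rw [this]
    exact ContinuousMap.isOpen_setOfPred_mapsTo isCompact_univ isOpen_Ioi
  have hdisj : Disjoint s (t : Set C(K, ℝ)) := by
    rw [Set.disjoint_left]
    intro f hf hft
    obtain ⟨c, hc⟩ := Finsupp.mem_span_range_iff_exists_finsupp.1 hft
    obtain ⟨φ, hφ⟩ := pietsch_real g h c.support (fun i => (c i : ℝ)) (fun i => (c i).2)
    have h1 := hf φ
    rw [← hc, Finsupp.sum, ContinuousMap.sum_apply] at h1
    exact absurd h1 (not_lt.2 hφ)
  obtain ⟨f, u, hfs, hft⟩ := geometric_hahn_banach_open hs₁ hs₂ t.convex hdisj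
  have hu0 : u ≤ 0 := by simpa using hft 0 t.zero_mem
  have h1 : f 1 < 0 := (hfs 1 (fun φ => by simp)).trans_le hu0
  have hu : 0 ≤ u := by
    by_contra! hlt
    have hε : 0 < u / (2 * f 1) := div_pos_of_neg_of_neg hlt (by linarith)
    have := hfs ((u / (2 * f 1)) • 1) (fun φ => by simpa using hε)
    rw [map_smul, smul_eq_mul] at this
    have h2 : u / (2 * f 1) * f 1 = u / 2 := by have := h1.ne; field_simp
    linarith
  have hnonneg : ∀ k : C(K, ℝ), (∀ φ, 0 ≤ k φ) → f k ≤ 0 := by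
    intro k hk
    by_contra! hlt
    have hε : 0 < f k / (-2 * f 1) := div_pos hlt (by linarith)
    have := hfs (k + (f k / (-2 * f 1)) • 1) (fun φ => by
      have := hk φ
      simp only [ContinuousMap.add_apply, ContinuousMap.smul_apply, ContinuousMap.one_apply,
        smul_eq_mul, mul_one]
      linarith)
    rw [map_add, map_smul, smul_eq_mul] at this
    have h2 : f k / (-2 * f 1) * f 1 = - f k / 2 := by have := h1.ne; field_simp
    linarith
  let Λ : CompactlySupportedContinuousMap K ℝ →ₚ[ℝ] ℝ := PositiveLinearMap.mk₀
    { toFun := fun k => (f 1)⁻¹ * f k.toContinuousMap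
      map_add' := fun a b => by
        have : (a + b).toContinuousMap = a.toContinuousMap + b.toContinuousMap := rfl
        rw [this, map_add, mul_add]
      map_smul' := fun r a => by
        have : (r • a).toContinuousMap = r • a.toContinuousMap := rfl
        rw [this, map_smul, smul_eq_mul, RingHom.id_apply, smul_eq_mul]; ring }
    (fun k hk => mul_nonneg_of_nonpos_of_nonpos (inv_nonpos.2 h1.le)
      (hnonneg _ (fun φ => hk φ)))
  have hint : ∀ k : C(K, ℝ), ∫ φ, k φ ∂(RealRMK.rieszMeasure Λ) = (f 1)⁻¹ * f k := by
    intro k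
    exact RealRMK.integral_rieszMeasure Λ ⟨k, HasCompactSupport.of_compactSpace k⟩
  refine ⟨RealRMK.rieszMeasure Λ, ⟨?_⟩, fun i => ?_⟩
  · have := hint 1
    rw [inv_mul_cancel₀ h1.ne] at this
    simpa [Measure.real, ENNReal.toReal_eq_one_iff] using this
  · rw [hint]
    exact mul_nonpos_of_nonpos_of_nonneg (inv_nonpos.2 h1.le)
      (hu.trans (hft _ (PointedCone.subset_hull ⟨i, rfl⟩)))

/-- **Unified Pietsch Domination Theorem.** Let `E` be a nonempty set,
`G` a Banach space, `K` a compact Hausdorff space, `0 < p < ∞`, and `R : K × E × G → [0,∞)`,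
`S : E × G → [0,∞)` with `φ ↦ R(φ,x,b)` continuous for all `x, b`.  Then `S` satisfies the
abstract `p`-summing inequality with respect to `R` if and only if there are `C > 0` and a
Borel probability measure `μ` on `K` with
`S(x,b) ≤ C (∫_K R(φ,x,b)^p dμ(φ))^{1/p}` for all `x ∈ E, b ∈ G`. -/
theorem stmt12 {K : Type*} [TopologicalSpace K] [CompactSpace K] [T2Space K]
    [Nonempty K] [MeasurableSpace K] [BorelSpace K]
    {E : Type*} [Nonempty E]
    {G : Type*} [NormedAddCommGroup G] [NormedSpace ℝ G] [CompleteSpace G]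
    (p : ℝ) (hp : 0 < p)
    (R : K → E → G → ℝ) (S : E → G → ℝ)
    (hRnn : ∀ φ x b, 0 ≤ R φ x b) (hSnn : ∀ x b, 0 ≤ S x b)
    (hRcont : ∀ x b, Continuous fun φ => R φ x b) :
    (∃ C : ℝ, 0 < C ∧ ∀ (m : ℕ) (x : Fin m → E) (b : Fin m → G),
        (∑ j, S (x j) (b j) ^ p) ^ (1 / p) ≤
          C * ⨆ φ : K, (∑ j, R φ (x j) (b j) ^ p) ^ (1 / p)) ↔
    (∃ C : ℝ, 0 < C ∧ ∃ μ : Measure K, IsProbabilityMeasure μ ∧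
        ∀ (x : E) (b : G),
          S x b ≤ C * (∫ φ, R φ x b ^ p ∂μ) ^ (1 / p)) := by
  have hRp : ∀ x b, Continuous fun φ => R φ x b ^ p := fun x b =>
    (hRcont x b).rpow_const (fun _ => Or.inr hp.le)
  have hRpnn : ∀ φ x b, 0 ≤ R φ x b ^ p := fun φ x b => Real.rpow_nonneg (hRnn φ x b) p
  have hSpnn : ∀ x b, 0 ≤ S x b ^ p := fun x b => Real.rpow_nonneg (hSnn x b) p
  have hroot : ∀ a : ℝ, 0 ≤ a → (a ^ (1 / p)) ^ p = a := fun a ha => by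
    rw [← Real.rpow_mul ha, one_div, inv_mul_cancel₀ hp.ne', Real.rpow_one]
  have hroot' : ∀ a : ℝ, 0 ≤ a → (a ^ p) ^ (1 / p) = a := fun a ha => by
    rw [← Real.rpow_mul ha, one_div, mul_inv_cancel₀ hp.ne', Real.rpow_one]
  have hip : 0 ≤ 1 / p := by positivity
  constructor
  · rintro ⟨C, hC, h⟩
    have hCp : 0 ≤ C ^ p := Real.rpow_nonneg hC.le p
    let g : E × G → C(K, ℝ) := fun q =>
      ⟨fun φ => S q.1 q.2 ^ p - C ^ p * R φ q.1 q.2 ^ p,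
        continuous_const.sub (continuous_const.mul (hRp q.1 q.2))⟩
    have hg : ∀ (m : ℕ) (i : Fin m → E × G), ∃ φ, ∑ j, g (i j) φ ≤ 0 := by
      intro m i
      have hcont : Continuous fun φ => (∑ j, R φ (i j).1 (i j).2 ^ p) ^ (1 / p) :=
        (continuous_finset_sum _ fun j _ => hRp _ _).rpow_const (fun _ => Or.inr hip)
      obtain ⟨φ₀, -, hφ₀⟩ :=
        isCompact_univ.exists_isMaxOn Set.univ_nonempty hcont.continuousOn
      refine ⟨φ₀, ?_⟩
      have h1 := h m (fun j => (i j).1) (fun j => (i j).2)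
      have h2 := h1.trans (mul_le_mul_of_nonneg_left
        (ciSup_le fun φ => hφ₀ (Set.mem_univ φ)) hC.le)
      have hA : 0 ≤ ∑ j, S (i j).1 (i j).2 ^ p := Finset.sum_nonneg fun j _ => hSpnn _ _
      have hB : 0 ≤ ∑ j, R φ₀ (i j).1 (i j).2 ^ p := Finset.sum_nonneg fun j _ => hRpnn _ _ _
      have h3 := Real.rpow_le_rpow (Real.rpow_nonneg hA _) h2 hp.le
      rw [hroot _ hA, Real.mul_rpow hC.le (Real.rpow_nonneg hB _), hroot _ hB] at h3
      simp only [g, ContinuousMap.coe_mk, Finset.sum_sub_distrib, ← Finset.mul_sum]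
      linarith
    obtain ⟨μ, hμ, hint⟩ := pietsch_abs g hg
    refine ⟨C, hC, μ, hμ, fun x b => ?_⟩
    have h1 := hint (x, b)
    have hI : Integrable (fun φ => R φ x b ^ p) μ :=
      (hRp x b).integrable_of_hasCompactSupport (HasCompactSupport.of_compactSpace _)
    simp only [g, ContinuousMap.coe_mk] at h1
    rw [integral_sub (integrable_const _) (hI.const_mul _), integral_const_mul] at h1
    simp only [integral_const, probReal_univ, one_smul] at h1
    have hI0 : 0 ≤ ∫ φ, R φ x b ^ p ∂μ := integral_nonneg fun φ => hRpnn φ x b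
    have h2 := Real.rpow_le_rpow (hSpnn x b) (sub_nonpos.1 h1) hip
    rwa [Real.mul_rpow hCp hI0, hroot' _ (hSnn x b), hroot' _ hC.le] at h2
  · rintro ⟨C, hC, μ, hμ, h⟩
    refine ⟨C, hC, fun m x b => ?_⟩
    have hCp : 0 ≤ C ^ p := Real.rpow_nonneg hC.le p
    have hcont : Continuous fun φ => (∑ j, R φ (x j) (b j) ^ p) ^ (1 / p) :=
      (continuous_finset_sum _ fun j _ => hRp _ _).rpow_const (fun _ => Or.inr hip)
    have hbdd := (isCompact_range hcont).bddAbove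
    set M := ⨆ φ : K, (∑ j, R φ (x j) (b j) ^ p) ^ (1 / p) with hM
    have hsum : ∀ φ, 0 ≤ ∑ j, R φ (x j) (b j) ^ p := fun φ =>
      Finset.sum_nonneg fun j _ => hRpnn _ _ _
    have hM0 : 0 ≤ M := Real.iSup_nonneg fun φ => Real.rpow_nonneg (hsum φ) _
    have hle : ∀ φ, ∑ j, R φ (x j) (b j) ^ p ≤ M ^ p := fun φ => by
      have := Real.rpow_le_rpow (Real.rpow_nonneg (hsum φ) _) (le_ciSup hbdd φ) hp.le
      rwa [hroot _ (hsum φ)] at this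
    have hI : ∀ x b, Integrable (fun φ => R φ x b ^ p) μ := fun x b =>
      (hRp x b).integrable_of_hasCompactSupport (HasCompactSupport.of_compactSpace _)
    have hS : ∀ x b, S x b ^ p ≤ C ^ p * ∫ φ, R φ x b ^ p ∂μ := fun x b => by
      have hI0 : 0 ≤ ∫ φ, R φ x b ^ p ∂μ := integral_nonneg fun φ => hRpnn φ x b
      have := Real.rpow_le_rpow (hSnn x b) (h x b) hp.le
      rwa [Real.mul_rpow hC.le (Real.rpow_nonneg hI0 _), hroot _ hI0] at this
    have key : ∑ j, S (x j) (b j) ^ p ≤ C ^ p * M ^ p := by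
      calc ∑ j, S (x j) (b j) ^ p
          ≤ ∑ j, C ^ p * ∫ φ, R φ (x j) (b j) ^ p ∂μ := Finset.sum_le_sum fun j _ => hS _ _
        _ = C ^ p * ∫ φ, ∑ j, R φ (x j) (b j) ^ p ∂μ := by
            rw [← Finset.mul_sum, integral_finset_sum _ fun j _ => hI _ _]
        _ ≤ C ^ p * ∫ _φ, M ^ p ∂μ := by
            refine mul_le_mul_of_nonneg_left ?_ hCp
            exact integral_mono (integrable_finset_sum _ fun j _ => hI _ _)
              (integrable_const _) hle
        _ = C ^ p * M ^ p := by simp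
    have := Real.rpow_le_rpow (Finset.sum_nonneg fun j _ => hSpnn _ _) key hip
    rwa [Real.mul_rpow hCp (Real.rpow_nonneg hM0 _), hroot' _ hC.le, hroot' _ hM0] at this
end
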